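/- Let m, B ∈ ℕ and let n_1, …, n_{3m} be pairwise distinct positive integers with Σ_{i=1}^{3m} n_i = mB and B/4 < n_i < B/2 for all i ∈ [3m], and let (D,K) be the digraph and commodity set constructed from these data as described, where each commodity is routed along the unique directed path in D from its source to its destination. Then the integers n_1, …, n_{3m} can be partitioned into m triples each summing to B if and only if the resulting MD-SPP instance with target 2 is a YES-instance. -/

import Mathlib

open Relation

variable {V : Type*} [DecidableEq V]

/-- The adjacency relation of a digraph given by its edge set. -/
def Adj (E : Finset (V × V)) : V → V → Prop := fun a b => (a, b) ∈ E

/-- `D` is a digraph: no self-loops (no parallel edges since edges form a set). -/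
def IsDigraph (D : Finset (V × V)) : Prop := ∀ e ∈ D, e.1 ≠ e.2

/-- `l` is a directed `s`-`t`-path w.r.t. the adjacency relation `A`:
a nonempty duplicate-free list of vertices, consecutive ones adjacent,
starting at `s` and ending at `t`. -/
def DiPath (A : V → V → Prop) (s t : V) (l : List V) : Prop :=
  l.Chain' A ∧ l.Nodup ∧ l.head? = some s ∧ l.getLast? = some t

/-- Adjacency in the transitive closure `T(D)` of the digraph with edge set `E`:
`(u,v)` is an edge iff `u ≠ v` and `v` is reachable from `u` in `E`. -/
def TCAdj (E : Finset (V × V)) (u v : V) : Prop :=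
  u ≠ v ∧ Relation.ReflTransGen (Adj E) u v

/-- The outdegree of `v` in the digraph with edge set `H`. -/
def outDeg (H : Finset (V × V)) (v : V) : ℕ :=
  (H.filter fun e => e.1 = v).card

/-- The list of (directed) edges traversed by a list of vertices. -/
def listEdges (l : List V) : List (V × V) := l.zip l.tail

/-- The routed commodities in `K` are valid: for `(s,t,P) ∈ K`,
`P` is a directed `s`-`t`-path in `D`. -/
def ValidSPP (D : Finset (V × V)) (K : Finset (V × V × List V)) : Prop :=
  ∀ k ∈ K, DiPath (Adj D) k.1 k.2.1 k.2.2

/-- `H` is a solution graph of the MD-SPP instance `(D,K,T)`: a subgraph of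
`T(D)` of maximum outdegree at most `T` such that every routed commodity
`(s,t,P) ∈ K` has a directed `s`-`t`-path in `H ∩ T(P)`, i.e. an `s`-`t`-path
whose edges are in `H` and whose vertices lie on `P` in the same order
(a sublist of `P`). -/
def SPPSolution (D : Finset (V × V)) (K : Finset (V × V × List V)) (T : ℕ)
    (H : Finset (V × V)) : Prop :=
  (∀ e ∈ H, TCAdj D e.1 e.2) ∧ (∀ v, outDeg H v ≤ T) ∧
  (∀ k ∈ K, ∃ l, DiPath (Adj H) k.1 k.2.1 l ∧ l.Sublist k.2.2)
/-- The vertices of the digraph constructed from a 3-Partition instance with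
`m` triples, bound `B` and integers `n : Fin (3*m) → ℕ`: the vertices
`s_i, s'_i` (`i ∈ [m]`), `w_i^j` (`i ∈ [3m]`, `j ∈ [n_i]`, 0-indexed),
`w̃_i` (`i ∈ [3m]`), and `r_i^j, r̃_i^j, r̄_i^j` (`i ∈ [m]`, `j ∈ [B]`,
0-indexed). (Vertices `w i j` with `j ≥ n i` and `r/rt/rb i j` with `j ≥ B`
are unused: they are isolated and occur in no commodity.) -/
inductive Vtx (m : ℕ) : Type
  | s (i : Fin m)
  | s' (i : Fin m)
  | w (i : Fin (3 * m)) (j : ℕ)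
  | wt (i : Fin (3 * m))
  | r (i : Fin m) (j : ℕ)
  | rt (i : Fin m) (j : ℕ)
  | rb (i : Fin m) (j : ℕ)
  deriving DecidableEq

/-- The main directed path of the construction:
`s_1, s'_1, …, s_m, s'_m`, then `w_1^1, …, w_1^{n_1}, …, w_{3m}^1, …,
w_{3m}^{n_{3m}}`, then `r_1^1, …, r_1^B, …, r_m^1, …, r_m^B` (0-indexed). -/
def mainPath (m B : ℕ) (n : Fin (3 * m) → ℕ) : List (Vtx m) :=
  ((List.finRange m).flatMap fun i => [Vtx.s i, Vtx.s' i]) ++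
  ((List.finRange (3 * m)).flatMap fun i =>
    (List.range (n i)).map fun j => Vtx.w i j) ++
  ((List.finRange m).flatMap fun i =>
    (List.range B).map fun j => Vtx.r i j)

/-- The edge set of the constructed digraph `D`: the main path, the edges
`(w_i^{n_i}, w̃_i)`, and the edges `(r_i^j, r̃_i^j)` and `(r_i^j, r̄_i^j)`. -/
def hardD (m B : ℕ) (n : Fin (3 * m) → ℕ) : Finset (Vtx m × Vtx m) :=
  (listEdges (mainPath m B n)).toFinset ∪
  ((List.finRange (3 * m)).map fun i => (Vtx.w i (n i - 1), Vtx.wt i)).toFinset ∪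
  ((List.finRange m).flatMap fun i => (List.range B).flatMap fun j =>
    [(Vtx.r i j, Vtx.rt i j), (Vtx.r i j, Vtx.rb i j)]).toFinset

/-- The commodity (source, destination) pairs of the construction:
`(s_i, s'_i)` and `(s_i, r_i^j)` for `i ∈ [m]`, `j ∈ [B]`;
`(w_i^j, w_i^{j+1})` for `i ∈ [3m]`, `j ∈ [n_i − 1]`; `(w_i^{n_i}, w̃_i)` for
`i ∈ [3m]`; and `(r_i^j, r̃_i^j)`, `(r_i^j, r̄_i^j)` for `i ∈ [m]`, `j ∈ [B]`. -/
def hardK (m B : ℕ) (n : Fin (3 * m) → ℕ) : Finset (Vtx m × Vtx m) :=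
  (((List.finRange m).map fun i => (Vtx.s i, Vtx.s' i)) ++
   ((List.finRange m).flatMap fun i =>
     (List.range B).map fun j => (Vtx.s i, Vtx.r i j)) ++
   ((List.finRange (3 * m)).flatMap fun i =>
     (List.range (n i - 1)).map fun j => (Vtx.w i j, Vtx.w i (j + 1))) ++
   ((List.finRange (3 * m)).map fun i => (Vtx.w i (n i - 1), Vtx.wt i)) ++
   ((List.finRange m).flatMap fun i => (List.range B).flatMap fun j =>
     [(Vtx.r i j, Vtx.rt i j), (Vtx.r i j, Vtx.rb i j)])).toFinset

/-- The integers `n_1, …, n_{3m}` can be partitioned into `m` triples each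
summing to `B`. -/
def ThreePartition (m B : ℕ) (n : Fin (3 * m) → ℕ) : Prop :=
  ∃ f : Fin (3 * m) → Fin m, ∀ t : Fin m,
    (Finset.univ.filter fun i => f i = t).card = 3 ∧
    ∑ i ∈ Finset.univ.filter (fun i => f i = t), n i = B

/-!
The construction has exactly `m` more sinks `wt i`, `rt t k`, `rb t k` than vertices on the main
path. In a solution graph `H` of maximum outdegree 2 every edge starts on the main path, so a set of
vertices all but `c` of which have an in-neighbour in the set contains at most `c` more sinks than
vertices of the main path. If `wt i` were not reachable from any `s t`, then neither would be the
`n i ≥ 2` vertices `w i j` leading to it, and the set of reachable vertices would contain too many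
sinks; hence everything is reachable. By counting edges, `H` is then a forest with the roots `s t`.
The vertices `s t`, `s' t`, `r t k`, `rt t k`, `rb t k` lie in the tree of `s t`, together with the
paths `w i 0, …, wt i` for `i` in some set `S t`. Counting sinks in this tree gives
`B + #(S t) ≤ 3 + ∑ i ∈ S t, n i`, and summing over `t` shows that equality holds throughout. As the
`n i` are distinct and lie strictly between `B / 4` and `B / 2`, this forces `#(S t) = 3`.

Conversely, given a triple with sum `B`, the vertices `s t` and `s' t` together have three free
out-edges, which lead to the three paths of the triple, and the `B` vertices `w i j` on these paths
have one free out-edge each, which lead to the `B` vertices `r t k`.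
-/

section Lists

variable {α : Type*} {l L P x z : List α} {u v : α}

theorem mem_listEdges_iff : (u, v) ∈ listEdges l ↔ [u, v] <:+: l := by
  induction l with
  | nil => simp [listEdges]
  | cons a l ih =>
    rw [List.infix_cons_iff, ← ih]
    cases l with
    | nil => simp [listEdges]
    | cons b l => simp [listEdges, List.cons_prefix_cons]

theorem pair_sublist_of_head?_of_getLast? (hne : u ≠ v) (hu : l.head? = some u)
    (hv : l.getLast? = some v) : [u, v].Sublist l := by
  obtain ⟨l, rfl⟩ := List.head?_eq_some_iff.1 hu
  have hmem : v ∈ l := (List.mem_cons.1 (List.mem_of_getLast? hv)).resolve_left hne.symm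
  exact (List.singleton_sublist.2 hmem).cons_cons u

theorem exists_infix_of_pair_sublist (h : [u, v].Sublist L) :
    ∃ P, P <:+: L ∧ P.head? = some u ∧ P.getLast? = some v := by
  obtain ⟨_, _, rfl, hu, hv⟩ := List.cons_sublist_iff.1 h
  obtain ⟨a, b, rfl⟩ := List.append_of_mem hu
  obtain ⟨c, d, rfl⟩ := List.append_of_mem (List.singleton_sublist.1 hv)
  exact ⟨u :: b ++ c ++ [v], ⟨a, d, by simp⟩, rfl, List.getLast?_concat⟩

theorem cons_cons_infix_of_nodup (hL : L.Nodup) (huv : [u, v] <:+: L) (hP : v :: P <:+: L) :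
    u :: v :: P <:+: L := by
  obtain ⟨a, b, rfl⟩ := huv
  obtain ⟨c, d, hcd⟩ := hP
  have hsplit : c ++ v :: (P ++ d) = (a ++ [u]) ++ v :: b := by simpa using hcd
  have hnodup : (a ++ [u] ++ v :: b).Nodup := by simpa using hL
  obtain ⟨hva, hvb⟩ : v ∉ a ++ [u] ∧ v ∉ b := by
    simpa only [List.mem_append, not_or] using (List.nodup_middle.1 hnodup).notMem
  rw [eq_comm, List.append_cons_inj_of_notMem hva hvb] at hsplit
  obtain ⟨rfl, -, rfl⟩ := hsplit
  exact ⟨a, d, by simp⟩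

theorem sublist_right_of_sublist_append (h : l.Sublist (x ++ z)) (hu : l.head? = some u)
    (hx : u ∉ x) : l.Sublist z := by
  obtain ⟨l₁, l₂, rfl, h₁, h₂⟩ := List.sublist_append_iff.1 h
  cases l₁ with
  | nil => exact h₂
  | cons a l₁ =>
    obtain rfl : a = u := by simpa using hu
    exact absurd (h₁.subset List.mem_cons_self) hx

theorem sublist_left_of_sublist_append (h : l.Sublist (x ++ z)) (hv : l.getLast? = some v)
    (hz : v ∉ z) : l.Sublist x := by
  rw [← List.reverse_sublist, List.reverse_append] at h
  rw [← List.reverse_sublist]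
  exact sublist_right_of_sublist_append h (by rwa [List.head?_reverse]) (by simpa using hz)

theorem sublist_of_sublist_of_infix (hL : L.Nodup) (hl : l.Sublist L) (hP : P <:+: L)
    (hlu : l.head? = some u) (hlv : l.getLast? = some v)
    (hPu : u ∈ P) (hPv : v ∈ P) : l.Sublist P := by
  obtain ⟨x, z, rfl⟩ := hP
  rw [List.append_assoc] at hl hL
  have hux : u ∉ x := fun h =>
    (List.nodup_append.1 hL).2.2 u h u (List.mem_append_left z hPu) rfl
  have hvz : v ∉ z := fun h =>
    (List.nodup_append.1 (List.nodup_append.1 hL).2.1).2.2 v hPv v h rfl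
  exact sublist_left_of_sublist_append (sublist_right_of_sublist_append hl hlu hux) hlv hvz

theorem infix_flatMap {β : Type*} {f : α → List β} {a : α} (ha : a ∈ l) :
    f a <:+: l.flatMap f := by
  rw [List.flatMap_def]
  exact List.infix_of_mem_flatten (List.mem_map_of_mem ha)

theorem nodup_flatMap_map_range {β : Type*} {f : α → ℕ → β} (N : α → ℕ)
    (hf : ∀ {a j a' j'}, f a j = f a' j' → a = a' ∧ j = j') (hl : l.Nodup) :
    (l.flatMap fun a => (List.range (N a)).map (f a)).Nodup := by
  refine List.nodup_flatMap.2
    ⟨fun a _ => List.nodup_range.map fun _ _ h => (hf h).2, hl.imp fun hne b hb hb' => ?_⟩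
  obtain ⟨j, -, rfl⟩ := List.mem_map.1 hb
  obtain ⟨j', -, h⟩ := List.mem_map.1 hb'
  exact hne (hf h).1.symm

theorem sum_map_flatMap {β M : Type*} [AddMonoid M] (f : α → List β) (g : β → M) :
    ((l.flatMap f).map g).sum = (l.map fun a => ((f a).map g).sum).sum := by
  rw [List.flatMap_def, List.map_flatten, List.sum_flatten, List.map_map, List.map_map]
  rfl

theorem sum_map_range {M : Type*} [AddCommMonoid M] (N : ℕ) (g : ℕ → M) :
    ((List.range N).map g).sum = ∑ j ∈ Finset.range N, g j := rfl

end Lists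

section Digraphs

variable {V : Type*} {D H : Finset (V × V)} {L P l : List V} {u v s t : V}

theorem DiPath.reflTransGen {A : V → V → Prop} (h : DiPath A s t l) : ReflTransGen A s t := by
  obtain ⟨hchain, -, hs, ht⟩ := h
  obtain ⟨l, rfl⟩ := List.head?_eq_some_iff.1 hs
  exact List.relationReflTransGen_of_exists_isChain_cons l hchain
    (by simpa [List.getLast?_eq_some_getLast] using ht)

theorem diPath_pair {A : V → V → Prop} (hne : s ≠ t) (h : A s t) : DiPath A s t [s, t] :=
  ⟨List.isChain_pair.2 h, by simpa using hne, rfl, rfl⟩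

/-- `L` is a spine of the digraph `D`: a directed path such that every edge of `D` either joins
consecutive vertices of `L` or leads from `L` to a vertex outside it. -/
structure IsSpine (D : Finset (V × V)) (L : List V) : Prop where
  nodup : L.Nodup
  isChain : L.IsChain (Adj D)
  infix_or_notMem : ∀ {u v}, (u, v) ∈ D → [u, v] <:+: L ∨ u ∈ L ∧ v ∉ L

namespace IsSpine

theorem fst_mem (hL : IsSpine D L) (h : (u, v) ∈ D) : u ∈ L :=
  (hL.infix_or_notMem h).elim (fun h => h.subset (by simp)) And.left

theorem ne (hL : IsSpine D L) (h : (u, v) ∈ D) : u ≠ v := by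
  rcases hL.infix_or_notMem h with h | ⟨hu, hv⟩
  · simpa using h.sublist.nodup hL.nodup
  · exact ne_of_mem_of_not_mem hu hv

theorem fst_mem_of_tcAdj (hL : IsSpine D L) (h : TCAdj D u v) : u ∈ L := by
  obtain ⟨w, huw, -⟩ := (ReflTransGen.cases_head h.2).resolve_left h.1
  exact hL.fst_mem huw

theorem tcAdj_of_mem (hL : IsSpine D L) (h : (u, v) ∈ D) : TCAdj D u v :=
  ⟨hL.ne h, .single h⟩

theorem tcAdj_of_sublist (hL : IsSpine D L) (h : [u, v].Sublist L) : TCAdj D u v := by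
  refine ⟨by simpa using h.nodup hL.nodup, ?_⟩
  have hchain : L.IsChain (ReflTransGen (Adj D)) := hL.isChain.imp fun _ _ => .single
  exact List.pairwise_pair.1 (hchain.pairwise.sublist h)

theorem infix_of_isChain (hL : IsSpine D L) (hP : (u :: P).IsChain (Adj D))
    (hv : (u :: P).getLast? = some v) (hvL : v ∈ L) : u :: P <:+: L := by
  induction P generalizing u with
  | nil =>
    obtain rfl : u = v := by simpa using hv
    obtain ⟨a, b, rfl⟩ := List.append_of_mem hvL
    exact ⟨a, b, by simp⟩
  | cons y P ih =>
    rw [List.isChain_cons_cons] at hP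
    rw [List.getLast?_cons_cons] at hv
    have hy : y ∈ L := by
      cases P with
      | nil =>
        obtain rfl : y = v := by simpa using hv
        exact hvL
      | cons z P => exact hL.fst_mem (List.isChain_cons_cons.1 hP.2).1
    have huy : [u, y] <:+: L := (hL.infix_or_notMem hP.1).resolve_right fun h => h.2 hy
    exact cons_cons_infix_of_nodup hL.nodup huy (ih hP.2 hv)

theorem sublist_of_diPath (hL : IsSpine D L) (hP : DiPath (Adj D) s t P) (hl : l.Sublist L)
    (hs : l.head? = some s) (ht : l.getLast? = some t) : l.Sublist P := by
  obtain ⟨hchain, -, hPs, hPt⟩ := hP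
  have htL : t ∈ L := hl.subset (List.mem_of_getLast? ht)
  have hPL : P <:+: L := by
    obtain ⟨P, rfl⟩ := List.head?_eq_some_iff.1 hPs
    exact hL.infix_of_isChain hchain hPt htL
  exact sublist_of_sublist_of_infix hL.nodup hl hPL hs ht (List.mem_of_head? hPs)
    (List.mem_of_getLast? hPt)

theorem exists_diPath_of_sublist (hL : IsSpine D L) (h : [s, t].Sublist L) :
    ∃ P, DiPath (Adj D) s t P := by
  obtain ⟨P, hP, hs, ht⟩ := exists_infix_of_pair_sublist h
  exact ⟨P, hL.isChain.infix hP, hP.sublist.nodup hL.nodup, hs, ht⟩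

end IsSpine

end Digraphs

section PairSolution

variable {V : Type*} [DecidableEq V] {D K H : Finset (V × V)} {T : ℕ} {s t : V}

/-- `H` is a solution graph, with target `T`, for the instance on `D` in which every pair of `K` is
routed along each directed path of `D` joining it. This removes the family of routed commodities
from the argument. -/
structure PairSolution (D K : Finset (V × V)) (T : ℕ) (H : Finset (V × V)) : Prop where
  tcAdj : ∀ e ∈ H, TCAdj D e.1 e.2
  outDeg_le : ∀ v, outDeg H v ≤ T
  route : ∀ s t P, (s, t) ∈ K → DiPath (Adj D) s t P → ∃ l, DiPath (Adj H) s t l ∧ l.Sublist P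

theorem sppSolution_iff_pairSolution {K' : Finset (V × V × List V)}
    (hK' : ∀ k : V × V × List V, k ∈ K' ↔ (k.1, k.2.1) ∈ K ∧ DiPath (Adj D) k.1 k.2.1 k.2.2) :
    SPPSolution D K' T H ↔ PairSolution D K T H := by
  constructor
  · rintro ⟨htc, hdeg, hroute⟩
    exact ⟨htc, hdeg, fun s t P hst hP => hroute (s, t, P) ((hK' _).2 ⟨hst, hP⟩)⟩
  · rintro ⟨htc, hdeg, hroute⟩
    exact ⟨htc, hdeg, fun k hk => hroute _ _ _ ((hK' k).1 hk).1 ((hK' k).1 hk).2⟩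

namespace PairSolution

theorem mem_of_mem (hH : PairSolution D K T H) (hne : s ≠ t) (hK : (s, t) ∈ K)
    (hD : (s, t) ∈ D) : (s, t) ∈ H := by
  obtain ⟨l, hl, hsub⟩ := hH.route s t [s, t] hK (diPath_pair hne hD)
  obtain rfl : l = [s, t] := hsub.antisymm (pair_sublist_of_head?_of_getLast? hne hl.2.2.1 hl.2.2.2)
  exact List.isChain_pair.1 hl.1

theorem reflTransGen_of_sublist {L : List V} (hH : PairSolution D K T H) (hL : IsSpine D L)
    (hK : (s, t) ∈ K) (hst : [s, t].Sublist L) : ReflTransGen (Adj H) s t := by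
  obtain ⟨P, hP⟩ := hL.exists_diPath_of_sublist hst
  obtain ⟨l, hl, -⟩ := hH.route s t P hK hP
  exact hl.reflTransGen

end PairSolution

end PairSolution

section Counting

open Finset

variable {V : Type*} [DecidableEq V] {H : Finset (V × V)} {R S T : Finset V} {d : ℕ}

theorem card_le_card_add_mul_card_of_exists_inEdge (hdeg : ∀ u ∈ S, outDeg H u ≤ d)
    (hT : ∀ v ∈ T, v ∉ R → ∃ u ∈ S, (u, v) ∈ H) : #T ≤ #R + d * #S := by
  have hsub : T ⊆ R ∪ S.biUnion fun u => {e ∈ H | e.1 = u}.image Prod.snd := by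
    intro v hv
    by_cases hvR : v ∈ R
    · exact mem_union_left _ hvR
    · obtain ⟨u, hu, huv⟩ := hT v hv hvR
      exact mem_union_right _ (mem_biUnion.2 ⟨u, hu, mem_image.2 ⟨(u, v), by simpa using huv, rfl⟩⟩)
  calc #T ≤ #R + #(S.biUnion fun u => {e ∈ H | e.1 = u}.image Prod.snd) :=
        (card_le_card hsub).trans (card_union_le _ _)
    _ ≤ #R + d * #S := by
        rw [mul_comm]
        gcongr
        exact card_biUnion_le_card_mul _ _ _ fun u hu => card_image_le.trans (hdeg u hu)

theorem card_filter_add_card_filter_le {L : Finset V} {p : V → Prop} [DecidablePred p]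
    (hSL : Disjoint S L) (hdeg : ∀ u, outDeg H u ≤ d) (hS : ∀ e ∈ H, e.1 ∈ S)
    (hp : ∀ v, p v → v ∉ R → ∃ u, p u ∧ (u, v) ∈ H) :
    #{v ∈ S | p v} + #{v ∈ L | p v} ≤ #R + d * #{v ∈ S | p v} := by
  rw [← card_union_of_disjoint (disjoint_filter_filter hSL)]
  refine card_le_card_add_mul_card_of_exists_inEdge (H := H) (fun u _ => hdeg u) fun v hv hvR => ?_
  have hpv : p v := (mem_union.1 hv).elim (fun h => (mem_filter.1 h).2) fun h => (mem_filter.1 h).2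
  obtain ⟨u, hpu, huv⟩ := hp v hpv hvR
  exact ⟨u, mem_filter.2 ⟨hS _ huv, hpu⟩, huv⟩

theorem card_edges_le_mul_card (hdeg : ∀ u ∈ S, outDeg H u ≤ d) (hS : ∀ e ∈ H, e.1 ∈ S) :
    #H ≤ d * #S :=
  card_le_mul_card_image_of_maps_to hS d hdeg

theorem image_snd_eq_of_card_le (hT : ∀ v ∈ T, ∃ u, (u, v) ∈ H) (hcard : #H ≤ #T) :
    H.image Prod.snd = T := by
  have hsub : T ⊆ H.image Prod.snd := fun v hv =>
    let ⟨u, huv⟩ := hT v hv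
    mem_image.2 ⟨(u, v), huv, rfl⟩
  exact (eq_of_subset_of_card_le hsub (card_image_le.trans hcard)).symm

theorem leftUnique_adj_of_card_le {α : Type*} {H : Finset (α × α)} {T : Finset α}
    (hT : ∀ v ∈ T, ∃ u, (u, v) ∈ H) (hcard : #H ≤ #T) : Relator.LeftUnique (Adj H) := by
  classical
  have hinj : Set.InjOn Prod.snd (H : Set (α × α)) := by
    apply card_image_iff.1
    exact card_image_le.antisymm (by rwa [image_snd_eq_of_card_le hT hcard])
  intro u v w huw hvw
  exact congrArg Prod.fst (hinj (mem_coe.2 huw) (mem_coe.2 hvw) rfl)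

theorem eq_of_reflTransGen_of_leftUnique {α : Type*} {r : α → α → Prop} {a b v : α}
    (hr : Relator.LeftUnique r) (ha : ∀ x, ¬r x a) (hb : ∀ x, ¬r x b)
    (hav : ReflTransGen r a v) (hbv : ReflTransGen r b v) : a = b := by
  have hswap : Relator.RightUnique (Function.swap r) := fun _ _ _ h₁ h₂ => hr h₁ h₂
  rcases ReflTransGen.total_of_right_unique hswap (reflTransGen_swap.2 hav)
    (reflTransGen_swap.2 hbv) with h | h
  · exact (ReflTransGen.cases_tail (reflTransGen_swap.1 h)).elim id fun ⟨x, _, hx⟩ => (ha x hx).elim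
  · exact (ReflTransGen.cases_tail (reflTransGen_swap.1 h)).elim Eq.symm
      fun ⟨x, _, hx⟩ => (hb x hx).elim

end Counting

section Construction

variable {m B : ℕ} {n : Fin (3 * m) → ℕ}

theorem s_s'_infix_flatMap (t : Fin m) :
    [Vtx.s t, Vtx.s' t] <:+: (List.finRange m).flatMap fun t => [Vtx.s t, Vtx.s' t] :=
  infix_flatMap (f := fun t => [Vtx.s t, Vtx.s' t]) (List.mem_finRange t)

theorem w_infix_flatMap (i : Fin (3 * m)) :
    (List.range (n i)).map (Vtx.w i) <:+:
      (List.finRange (3 * m)).flatMap fun i => (List.range (n i)).map (Vtx.w i) :=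
  infix_flatMap (f := fun i => (List.range (n i)).map (Vtx.w i)) (List.mem_finRange i)

theorem r_infix_flatMap (t : Fin m) :
    (List.range B).map (Vtx.r t) <:+:
      (List.finRange m).flatMap fun t => (List.range B).map (Vtx.r t) :=
  infix_flatMap (f := fun t => (List.range B).map (Vtx.r t)) (List.mem_finRange t)

theorem s_s'_infix_mainPath (t : Fin m) : [Vtx.s t, Vtx.s' t] <:+: mainPath m B n := by
  rw [mainPath, List.append_assoc]
  exact (s_s'_infix_flatMap t).trans (List.prefix_append _ _).isInfix

theorem w_infix_mainPath (i : Fin (3 * m)) :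
    (List.range (n i)).map (Vtx.w i) <:+: mainPath m B n :=
  (w_infix_flatMap i).trans (List.infix_append _ _ _)

theorem append_sublist_mainPath {a b c : List (Vtx m)} {t t' : Fin m} {i : Fin (3 * m)}
    (ha : a.Sublist [Vtx.s t, Vtx.s' t]) (hb : b.Sublist ((List.range (n i)).map (Vtx.w i)))
    (hc : c.Sublist ((List.range B).map (Vtx.r t'))) :
    (a ++ b ++ c).Sublist (mainPath m B n) :=
  ((ha.trans (s_s'_infix_flatMap t).sublist).append
    (hb.trans (w_infix_flatMap i).sublist)).append (hc.trans (r_infix_flatMap t').sublist)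

@[simp]
theorem mem_mainPath_s (t : Fin m) : Vtx.s t ∈ mainPath m B n := by simp [mainPath]

@[simp]
theorem mem_mainPath_s' (t : Fin m) : Vtx.s' t ∈ mainPath m B n := by simp [mainPath]

@[simp]
theorem mem_mainPath_w {i : Fin (3 * m)} {j : ℕ} : Vtx.w i j ∈ mainPath m B n ↔ j < n i := by
  simp [mainPath]

@[simp]
theorem mem_mainPath_r {t : Fin m} {k : ℕ} : Vtx.r t k ∈ mainPath m B n ↔ k < B := by
  simp [mainPath]

@[simp]
theorem wt_notMem_mainPath (i : Fin (3 * m)) : Vtx.wt i ∉ mainPath m B n := by simp [mainPath]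

@[simp]
theorem rt_notMem_mainPath (t : Fin m) (k : ℕ) : Vtx.rt t k ∉ mainPath m B n := by simp [mainPath]

@[simp]
theorem rb_notMem_mainPath (t : Fin m) (k : ℕ) : Vtx.rb t k ∉ mainPath m B n := by simp [mainPath]

theorem nodup_mainPath : (mainPath m B n).Nodup := by
  have hs : ((List.finRange m).flatMap fun t => [Vtx.s t, Vtx.s' t]).Nodup :=
    List.nodup_flatMap.2 ⟨by simp, (List.nodup_finRange m).imp fun h => by simp [h.symm]⟩
  refine (hs.append (nodup_flatMap_map_range n (by simp) (List.nodup_finRange _)) ?_).append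
    (nodup_flatMap_map_range (fun _ => B) (by simp) (List.nodup_finRange _)) ?_ <;>
  · intro v
    cases v <;> simp

theorem mem_hardD_iff {u v : Vtx m} :
    (u, v) ∈ hardD m B n ↔ [u, v] <:+: mainPath m B n ∨
      (∃ i, u = Vtx.w i (n i - 1) ∧ v = Vtx.wt i) ∨
      ∃ t, ∃ k < B, u = Vtx.r t k ∧ (v = Vtx.rt t k ∨ v = Vtx.rb t k) := by
  simp only [hardD, Finset.mem_union, List.mem_toFinset, mem_listEdges_iff, List.mem_map,
    List.mem_flatMap, List.mem_finRange, List.mem_range, true_and, List.mem_cons, Prod.mk.injEq,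
    List.not_mem_nil, or_false, or_assoc, ← and_or_left, eq_comm]

theorem isChain_mainPath : (mainPath m B n).IsChain (Adj (hardD m B n)) :=
  List.isChain_iff_forall_rel_of_append_cons_cons.2 fun {u v a b} h =>
    mem_hardD_iff.2 (.inl ⟨a, b, by simp [h]⟩)

theorem isSpine_hardD (hpos : ∀ i, 0 < n i) : IsSpine (hardD m B n) (mainPath m B n) where
  nodup := nodup_mainPath
  isChain := isChain_mainPath
  infix_or_notMem := by
    intro u v huv
    refine (mem_hardD_iff.1 huv).imp_right ?_
    rintro (⟨i, rfl, rfl⟩ | ⟨t, k, hk, rfl, rfl | rfl⟩)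
    · simp [hpos i]
    · simp [hk]
    · simp [hk]

/-- The commodities of the construction that join the ends of an edge of `hardD`, i.e. all except
those from `s t` to `r t k`. -/
inductive IsDirect (B : ℕ) (n : Fin (3 * m) → ℕ) : Vtx m → Vtx m → Prop
  | s_s' (t : Fin m) : IsDirect B n (.s t) (.s' t)
  | w_w {i : Fin (3 * m)} {j : ℕ} (hj : j + 1 < n i) : IsDirect B n (.w i j) (.w i (j + 1))
  | w_wt {i : Fin (3 * m)} {j : ℕ} (hj : j + 1 = n i) : IsDirect B n (.w i j) (.wt i)
  | r_rt (t : Fin m) {k : ℕ} (hk : k < B) : IsDirect B n (.r t k) (.rt t k)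
  | r_rb (t : Fin m) {k : ℕ} (hk : k < B) : IsDirect B n (.r t k) (.rb t k)

theorem IsDirect.mem_hardD {u v : Vtx m} (h : IsDirect B n u v) : (u, v) ∈ hardD m B n := by
  cases h with
  | s_s' t => exact List.isChain_pair.1 (isChain_mainPath.infix (s_s'_infix_mainPath t))
  | @w_w i j hj =>
    have hchain := (isChain_mainPath (B := B) (n := n)).infix (w_infix_mainPath i)
    rw [List.isChain_map, List.isChain_range] at hchain
    exact hchain j (Nat.lt_sub_of_add_lt hj)
  | w_wt hj => exact mem_hardD_iff.2 (.inr (.inl ⟨_, by simp [← hj], rfl⟩))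
  | r_rt t hk => exact mem_hardD_iff.2 (.inr (.inr ⟨t, _, hk, rfl, .inl rfl⟩))
  | r_rb t hk => exact mem_hardD_iff.2 (.inr (.inr ⟨t, _, hk, rfl, .inr rfl⟩))

theorem mem_hardK_iff (hpos : ∀ i, 0 < n i) {u v : Vtx m} :
    (u, v) ∈ hardK m B n ↔ IsDirect B n u v ∨ ∃ t, ∃ k < B, u = Vtx.s t ∧ v = Vtx.r t k := by
  simp only [hardK, List.mem_toFinset, List.mem_append, List.mem_map, List.mem_flatMap,
    List.mem_finRange, List.mem_range, true_and, List.mem_cons, Prod.mk.injEq, List.not_mem_nil,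
    or_false, or_assoc]
  constructor
  · rintro (⟨t, rfl, rfl⟩ | ⟨t, k, hk, rfl, rfl⟩ | ⟨i, j, hj, rfl, rfl⟩ | ⟨i, rfl, rfl⟩ |
      ⟨t, k, hk, ⟨rfl, rfl⟩ | ⟨rfl, rfl⟩⟩)
    · exact .inl (.s_s' t)
    · exact .inr ⟨t, k, hk, rfl, rfl⟩
    · exact .inl (.w_w (by omega))
    · exact .inl (.w_wt (Nat.sub_add_cancel (hpos i)))
    · exact .inl (.r_rt t hk)
    · exact .inl (.r_rb t hk)
  · rintro ((t | hj | hj | ⟨t, hk⟩ | ⟨t, hk⟩) | ⟨t, k, hk, rfl, rfl⟩)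
    · simp
    · simpa using Nat.lt_sub_of_add_lt hj
    · simpa using (Nat.eq_sub_of_add_eq hj).symm
    · simp [hk]
    · simp [hk]
    · simp [hk]

end Construction
section Sums

variable {m B : ℕ} {n : Fin (3 * m) → ℕ}

/-- The vertices of the main path. -/
def spine (m B : ℕ) (n : Fin (3 * m) → ℕ) : Finset (Vtx m) :=
  (mainPath m B n).toFinset

/-- The sinks of the construction, listed without repetition. -/
def leafList (m B : ℕ) : List (Vtx m) :=
  (List.finRange (3 * m)).map Vtx.wt ++
    ((List.finRange m).flatMap fun t => (List.range B).map (Vtx.rt t)) ++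
    (List.finRange m).flatMap fun t => (List.range B).map (Vtx.rb t)

/-- The sinks of the construction. -/
def leaves (m B : ℕ) : Finset (Vtx m) :=
  (leafList m B).toFinset

theorem nodup_leafList : (leafList m B).Nodup := by
  refine (((List.nodup_finRange _).map fun _ _ => by simp).append
    (nodup_flatMap_map_range (fun _ => B) (by simp) (List.nodup_finRange _)) ?_).append
    (nodup_flatMap_map_range (fun _ => B) (by simp) (List.nodup_finRange _)) ?_ <;>
  · intro v
    cases v <;> simp

theorem sum_spine (g : Vtx m → ℕ) :
    ∑ v ∈ spine m B n, g v = ∑ t, (g (.s t) + g (.s' t)) +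
      ∑ i, ∑ j ∈ Finset.range (n i), g (.w i j) + ∑ t, ∑ k ∈ Finset.range B, g (.r t k) := by
  rw [spine, List.sum_toFinset g nodup_mainPath]
  simp only [mainPath, List.map_append, List.sum_append,
    sum_map_flatMap, List.map_map, Function.comp_def, sum_map_range, Fin.sum_univ_def,
    List.map_cons, List.map_nil, List.sum_cons, List.sum_nil, add_zero]

theorem sum_leaves (g : Vtx m → ℕ) :
    ∑ v ∈ leaves m B, g v = ∑ i, g (.wt i) + ∑ t, ∑ k ∈ Finset.range B, g (.rt t k) +
      ∑ t, ∑ k ∈ Finset.range B, g (.rb t k) := by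
  rw [leaves, List.sum_toFinset g nodup_leafList]
  simp only [leafList, List.map_append, List.sum_append,
    sum_map_flatMap, List.map_map, Function.comp_def, sum_map_range, Fin.sum_univ_def]

theorem disjoint_spine_leaves : Disjoint (spine m B n) (leaves m B) := by
  rw [Finset.disjoint_left]
  intro v
  cases v <;> simp [spine, leaves, leafList]

theorem card_leaves (hsum : ∑ i, n i = m * B) : (leaves m B).card = m + (spine m B n).card := by
  simp only [Finset.card_eq_sum_ones, sum_leaves, sum_spine]
  simp only [Finset.sum_const, Finset.card_univ, Fintype.card_fin, smul_eq_mul, mul_one,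
    Finset.card_range, Nat.reduceAdd, hsum]
  ring

end Sums
section TriplesOfSolution

open Finset

variable {m B : ℕ} {n : Fin (3 * m) → ℕ} {H : Finset (Vtx m × Vtx m)}

theorem s_r_sublist_mainPath (t : Fin m) {k : ℕ} (hk : k < B) :
    [Vtx.s t, Vtx.r t k].Sublist (mainPath m B n) :=
  ((List.singleton_sublist.2 (by simp)).append (List.nil_sublist _)).append
    (List.singleton_sublist.2 (by simp [hk]))

/-- The properties of a solution graph from which a 3-partition is read off. If every `n i` is at
least `2` and they sum to `m * B`, they force `H` to be a forest of binary trees rooted at the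
vertices `s t`. -/
structure BinaryForest (B : ℕ) (n : Fin (3 * m) → ℕ) (H : Finset (Vtx m × Vtx m)) : Prop where
  outDeg_le : ∀ v, outDeg H v ≤ 2
  fst_mem : ∀ e ∈ H, e.1 ∈ spine m B n
  mem_of_isDirect : ∀ {u v}, IsDirect B n u v → (u, v) ∈ H
  reach_r : ∀ t, ∀ k < B, ReflTransGen (Adj H) (.s t) (.r t k)

theorem PairSolution.binaryForest (hpos : ∀ i, 0 < n i)
    (hH : PairSolution (hardD m B n) (hardK m B n) 2 H) : BinaryForest B n H where
  outDeg_le := hH.outDeg_le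
  fst_mem e he := List.mem_toFinset.2 ((isSpine_hardD hpos).fst_mem_of_tcAdj (hH.tcAdj e he))
  mem_of_isDirect h := hH.mem_of_mem ((isSpine_hardD hpos).ne h.mem_hardD)
    ((mem_hardK_iff hpos).2 (.inl h)) h.mem_hardD
  reach_r t k hk := hH.reflTransGen_of_sublist (isSpine_hardD hpos)
    ((mem_hardK_iff hpos).2 (.inr ⟨t, k, hk, rfl, rfl⟩)) (s_r_sublist_mainPath t hk)

/-- `v` can be reached in `H` from one of the vertices `s t`. -/
def Reached (H : Finset (Vtx m × Vtx m)) (v : Vtx m) : Prop :=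
  ∃ t, ReflTransGen (Adj H) (.s t) v

namespace BinaryForest

theorem reach_wt (hH : BinaryForest B n H) {i : Fin (3 * m)} {j : ℕ} (hj : j < n i) :
    ReflTransGen (Adj H) (.w i j) (.wt i) := by
  obtain ⟨d, hd⟩ := Nat.exists_eq_add_of_lt hj
  induction d generalizing j with
  | zero => exact .single (hH.mem_of_isDirect (.w_wt hd.symm))
  | succ d ih => exact .head (hH.mem_of_isDirect (.w_w (by omega))) (ih (by omega) (by omega))

theorem reach_rt (hH : BinaryForest B n H) (t : Fin m) {k : ℕ} (hk : k < B) :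
    ReflTransGen (Adj H) (.s t) (.rt t k) :=
  (hH.reach_r t k hk).tail (hH.mem_of_isDirect (.r_rt t hk))

theorem reach_rb (hH : BinaryForest B n H) (t : Fin m) {k : ℕ} (hk : k < B) :
    ReflTransGen (Adj H) (.s t) (.rb t k) :=
  (hH.reach_r t k hk).tail (hH.mem_of_isDirect (.r_rb t hk))

theorem card_leaves_filter_le (hH : BinaryForest B n H) {R : Finset (Vtx m)} {p : Vtx m → Prop}
    [DecidablePred p] (hp : ∀ v, p v → v ∉ R → ∃ u, p u ∧ (u, v) ∈ H) :
    #{v ∈ leaves m B | p v} ≤ #R + #{v ∈ spine m B n | p v} := by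
  have := card_filter_add_card_filter_le disjoint_spine_leaves hH.outDeg_le hH.fst_mem hp
  omega

section Reached

variable [DecidablePred (Reached H)]

theorem card_spine_not_reached_le (hH : BinaryForest B n H) (hsum : ∑ i, n i = m * B) :
    #{v ∈ spine m B n | ¬Reached H v} ≤ #{v ∈ leaves m B | ¬Reached H v} := by
  have hcount := hH.card_leaves_filter_le (R := univ.image Vtx.s) (p := Reached H) <| by
    rintro v ⟨t, ht⟩ hv
    obtain rfl | ⟨u, hu, huv⟩ := ht.cases_tail
    · simp at hv
    · exact ⟨u, ⟨t, hu⟩, huv⟩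
  have hroots : #(univ.image (Vtx.s (m := m))) ≤ m := card_image_le.trans_eq (card_fin m)
  have := card_leaves (B := B) hsum
  have hsplit (F : Finset (Vtx m)) : #{v ∈ F | Reached H v} + #{v ∈ F | ¬Reached H v} = #F :=
    card_filter_add_card_filter_not _
  have := hsplit (spine m B n)
  have := hsplit (leaves m B)
  omega

theorem card_leaves_not_reached (hH : BinaryForest B n H) :
    #{v ∈ leaves m B | ¬Reached H v} = ∑ i, if Reached H (.wt i) then 0 else 1 := by
  have hrt (t : Fin m) : ∑ k ∈ range B, (if Reached H (.rt t k) then 0 else 1) = 0 :=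
    sum_eq_zero fun k hk => if_pos ⟨t, hH.reach_rt t (mem_range.1 hk)⟩
  have hrb (t : Fin m) : ∑ k ∈ range B, (if Reached H (.rb t k) then 0 else 1) = 0 :=
    sum_eq_zero fun k hk => if_pos ⟨t, hH.reach_rb t (mem_range.1 hk)⟩
  simp only [card_filter, ite_not, sum_leaves, hrt, hrb, sum_const_zero, add_zero]

theorem two_mul_sum_not_reached_le (hH : BinaryForest B n H) (hn : ∀ i, 2 ≤ n i) :
    2 * ∑ i, (if Reached H (.wt i) then 0 else 1) ≤ #{v ∈ spine m B n | ¬Reached H v} := by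
  have hw (i : Fin (3 * m)) : 2 * (if Reached H (.wt i) then 0 else 1) ≤
      ∑ j ∈ range (n i), if Reached H (.w i j) then 0 else 1 := by
    split_ifs with h
    · exact Nat.zero_le _
    · have hunreached : ∀ j ∈ range (n i), (if Reached H (.w i j) then 0 else 1) = 1 :=
        fun j hj => if_neg fun ⟨t, ht⟩ => h ⟨t, ht.trans (hH.reach_wt (mem_range.1 hj))⟩
      simpa [sum_congr rfl hunreached] using hn i
  simp only [card_filter, ite_not, sum_spine, mul_sum]
  exact (sum_le_sum fun i _ => hw i).trans (by omega)

end Reached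

theorem reached (hH : BinaryForest B n H) (hn : ∀ i, 2 ≤ n i) (hsum : ∑ i, n i = m * B)
    {v : Vtx m} (hv : v ∈ spine m B n ∪ leaves m B) : Reached H v := by
  classical
  have hle := hH.card_spine_not_reached_le hsum
  have hleaves := hH.card_leaves_not_reached
  have hspine := hH.two_mul_sum_not_reached_le hn
  have hempty : #{v ∈ spine m B n | ¬Reached H v} = 0 ∧ #{v ∈ leaves m B | ¬Reached H v} = 0 := by
    omega
  simp only [card_eq_zero, filter_eq_empty_iff, not_not] at hempty
  exact (mem_union.1 hv).elim (fun h => hempty.1 h) fun h => hempty.2 h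

theorem exists_inEdge (hH : BinaryForest B n H) (hn : ∀ i, 2 ≤ n i) (hsum : ∑ i, n i = m * B) :
    ∀ v ∈ (spine m B n ∪ leaves m B) \ univ.image Vtx.s, ∃ u, (u, v) ∈ H := by
  intro v hv
  obtain ⟨hv, hroot⟩ := mem_sdiff.1 hv
  obtain ⟨t, ht⟩ := hH.reached hn hsum hv
  obtain rfl | ⟨u, -, huv⟩ := ht.cases_tail
  · simp at hroot
  · exact ⟨u, huv⟩

theorem card_edges_le (hH : BinaryForest B n H) (hsum : ∑ i, n i = m * B) :
    #H ≤ #((spine m B n ∪ leaves m B) \ univ.image Vtx.s) := by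
  have hroots : univ.image Vtx.s ⊆ spine m B n ∪ leaves m B := by
    simp [Finset.subset_iff, spine]
  rw [card_sdiff_of_subset hroots, card_union_of_disjoint disjoint_spine_leaves, card_leaves hsum,
    card_image_of_injective _ fun _ _ => Vtx.s.inj, card_fin]
  have := card_edges_le_mul_card (fun u _ => hH.outDeg_le u) hH.fst_mem
  omega

theorem leftUnique_adj (hH : BinaryForest B n H) (hn : ∀ i, 2 ≤ n i) (hsum : ∑ i, n i = m * B) :
    Relator.LeftUnique (Adj H) :=
  leftUnique_adj_of_card_le (hH.exists_inEdge hn hsum) (hH.card_edges_le hsum)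

theorem not_adj_s (hH : BinaryForest B n H) (hn : ∀ i, 2 ≤ n i) (hsum : ∑ i, n i = m * B)
    (t : Fin m) (u : Vtx m) : ¬Adj H u (.s t) := fun h => by
  have hmem : Vtx.s t ∈ H.image Prod.snd := mem_image.2 ⟨_, h, rfl⟩
  rw [image_snd_eq_of_card_le (hH.exists_inEdge hn hsum) (hH.card_edges_le hsum)] at hmem
  simp at hmem

theorem root_unique (hH : BinaryForest B n H) (hn : ∀ i, 2 ≤ n i) (hsum : ∑ i, n i = m * B)
    {t t' : Fin m} {v : Vtx m} (ht : ReflTransGen (Adj H) (.s t) v)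
    (ht' : ReflTransGen (Adj H) (.s t') v) : t = t' :=
  Vtx.s.inj <| eq_of_reflTransGen_of_leftUnique (hH.leftUnique_adj hn hsum)
    (hH.not_adj_s hn hsum t) (hH.not_adj_s hn hsum t') ht ht'

/-- The index `t` of the tree that contains a given vertex, where `f i` is the index of the tree
that contains `wt i`. -/
def owner (f : Fin (3 * m) → Fin m) : Vtx m → Fin m
  | .s t | .s' t | .r t _ | .rt t _ | .rb t _ => t
  | .w i _ | .wt i => f i

variable {f : Fin (3 * m) → Fin m}

theorem reach_of_owner (hH : BinaryForest B n H) (hn : ∀ i, 2 ≤ n i) (hsum : ∑ i, n i = m * B)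
    (hf : ∀ i, ReflTransGen (Adj H) (.s (f i)) (.wt i)) {v : Vtx m}
    (hv : v ∈ spine m B n ∪ leaves m B) : ReflTransGen (Adj H) (.s (owner f v)) v := by
  cases v with
  | s t => exact .refl
  | s' t => exact .single (hH.mem_of_isDirect (.s_s' t))
  | w i j =>
    obtain ⟨t, ht⟩ := hH.reached hn hsum hv
    have hj : j < n i := by simpa [spine, leaves, leafList] using hv
    rwa [hH.root_unique hn hsum (ht.trans (hH.reach_wt hj)) (hf i)] at ht
  | wt i => exact hf i
  | r t k => exact hH.reach_r t k (by simpa [spine, leaves, leafList] using hv)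
  | rt t k => exact hH.reach_rt t (by simpa [spine, leaves, leafList] using hv)
  | rb t k => exact hH.reach_rb t (by simpa [spine, leaves, leafList] using hv)

theorem reach_iff_owner (hH : BinaryForest B n H) (hn : ∀ i, 2 ≤ n i) (hsum : ∑ i, n i = m * B)
    (hf : ∀ i, ReflTransGen (Adj H) (.s (f i)) (.wt i)) {v : Vtx m}
    (hv : v ∈ spine m B n ∪ leaves m B) (t : Fin m) :
    ReflTransGen (Adj H) (.s t) v ↔ owner f v = t := by
  have howner := hH.reach_of_owner hn hsum hf hv
  exact ⟨hH.root_unique hn hsum howner, fun h => h ▸ howner⟩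

theorem card_leaves_owner_le (hH : BinaryForest B n H) (hn : ∀ i, 2 ≤ n i)
    (hsum : ∑ i, n i = m * B) (hf : ∀ i, ReflTransGen (Adj H) (.s (f i)) (.wt i)) (t : Fin m) :
    #{v ∈ leaves m B | owner f v = t} ≤ 1 + #{v ∈ spine m B n | owner f v = t} := by
  classical
  have hcount := hH.card_leaves_filter_le (R := {.s t})
    (p := fun v => ReflTransGen (Adj H) (.s t) v) fun v hv hroot => by
      obtain rfl | ⟨u, hu, huv⟩ := hv.cases_tail
      · simp at hroot
      · exact ⟨u, hu, huv⟩
  rwa [card_singleton,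
    filter_congr fun v hv => hH.reach_iff_owner hn hsum hf (mem_union_right _ hv) t,
    filter_congr fun v hv => hH.reach_iff_owner hn hsum hf (mem_union_left _ hv) t] at hcount

theorem card_spine_owner (t : Fin m) :
    #{v ∈ spine m B n | owner f v = t} = 2 + ∑ i with f i = t, n i + B := by
  calc _ = ∑ t', ((if t' = t then 1 else 0) + if t' = t then 1 else 0) +
        ∑ i, ∑ _j ∈ range (n i), (if f i = t then 1 else 0) +
        ∑ t', ∑ _k ∈ range B, (if t' = t then 1 else 0) := by
        rw [card_filter, sum_spine]
        rfl
    _ = _ := by simp [sum_filter, sum_add_distrib]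

theorem card_leaves_owner (t : Fin m) :
    #{v ∈ leaves m B | owner f v = t} = #{i | f i = t} + 2 * B := by
  calc _ = ∑ i, (if f i = t then 1 else 0) + ∑ t', ∑ _k ∈ range B, (if t' = t then 1 else 0) +
        ∑ t', ∑ _k ∈ range B, (if t' = t then 1 else 0) := by
        rw [card_filter, sum_leaves]
        rfl
    _ = _ := by simp [two_mul, add_assoc]

theorem exists_card_add_eq (hH : BinaryForest B n H) (hn : ∀ i, 2 ≤ n i)
    (hsum : ∑ i, n i = m * B) :
    ∃ f : Fin (3 * m) → Fin m, ∀ t, B + #{i | f i = t} = 3 + ∑ i with f i = t, n i := by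
  choose f hf using fun i => hH.reached hn hsum (v := .wt i) (by simp [leaves, leafList])
  have hle (t : Fin m) : B + #{i | f i = t} ≤ 3 + ∑ i with f i = t, n i := by
    have := hH.card_leaves_owner_le hn hsum hf t
    rw [card_spine_owner, card_leaves_owner] at this
    omega
  have hcard : ∑ t, #{i | f i = t} = 3 * m := by
    rw [← card_eq_sum_card_fiberwise (s := univ) fun i _ => mem_univ (f i), card_fin]
  have htotal : ∑ t, (B + #{i | f i = t}) = ∑ t, (3 + ∑ i with f i = t, n i) := by
    simp only [sum_add_distrib, hcard, sum_fiberwise, hsum, sum_const, card_fin, smul_eq_mul]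
    ring
  exact ⟨f, fun t => (sum_eq_sum_iff_of_le fun t _ => hle t).1 htotal t (mem_univ t)⟩

end BinaryForest

end TriplesOfSolution

section Arithmetic

open Finset

variable {ι : Type*} {n : ι → ℕ} {B : ℕ}

theorem five_le_of_injective [Nontrivial ι] (hn : Function.Injective n)
    (hbound : ∀ i, B < 4 * n i ∧ 2 * n i < B) : 5 ≤ B := by
  obtain ⟨i, j, hij⟩ := exists_pair_ne ι
  have := hn.ne hij
  have := hbound i
  have := hbound j
  omega

theorem card_eq_three_of_add_eq (hn : Function.Injective n) (hB : 5 ≤ B)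
    (hbound : ∀ i, B < 4 * n i ∧ 2 * n i < B) {S : Finset ι}
    (h : B + #S = 3 + ∑ i ∈ S, n i) : #S = 3 := by
  have hS : 1 < #S := by
    by_contra hS
    rcases Nat.le_one_iff_eq_zero_or_eq_one.1 (not_lt.1 hS) with hS | hS
    · obtain rfl := card_eq_zero.1 hS
      rw [hS, sum_empty] at h
      omega
    · obtain ⟨i, rfl⟩ := card_eq_one.1 hS
      rw [hS, sum_singleton] at h
      have := hbound i
      omega
  obtain ⟨i, hi, j, hj, hij⟩ := one_lt_card.1 hS
  have hne := hn.ne hij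
  have hlow : ∑ _i ∈ S, (B + 1) < ∑ i ∈ S, 4 * n i :=
    sum_lt_sum (fun i _ => (hbound i).1) <| by
      rcases hne.lt_or_gt with hlt | hlt
      · exact ⟨j, hj, by have := hbound i; omega⟩
      · exact ⟨i, hi, by have := hbound j; omega⟩
  have hhigh : ∑ i ∈ S, (2 * n i + 1) < ∑ _i ∈ S, B :=
    sum_lt_sum (fun i _ => (hbound i).2) <| by
      rcases hne.lt_or_gt with hlt | hlt
      · exact ⟨i, hi, by have := hbound j; omega⟩
      · exact ⟨j, hj, by have := hbound i; omega⟩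
  simp only [sum_const, smul_eq_mul, ← mul_sum, sum_add_distrib, mul_one] at hlow hhigh
  obtain ⟨b, rfl⟩ := Nat.exists_eq_add_of_le hB
  have hlt : #S < 4 := by nlinarith
  have hgt : 2 < #S := by nlinarith
  omega

end Arithmetic

theorem PairSolution.threePartition {m B : ℕ} {n : Fin (3 * m) → ℕ} {H : Finset (Vtx m × Vtx m)}
    (hn : Function.Injective n) (hsum : ∑ i, n i = m * B) (hbound : ∀ i, B < 4 * n i ∧ 2 * n i < B)
    (hH : PairSolution (hardD m B n) (hardK m B n) 2 H) : ThreePartition m B n := by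
  rcases Nat.eq_zero_or_pos m with rfl | hm
  · exact ⟨Fin.elim0, fun t => t.elim0⟩
  have : Nontrivial (Fin (3 * m)) := Fin.nontrivial_iff_two_le.2 (by omega)
  have hB : 5 ≤ B := five_le_of_injective hn hbound
  have htwo (i : Fin (3 * m)) : 2 ≤ n i := by
    have := hbound i
    omega
  have hforest := hH.binaryForest fun i => two_pos.trans_le (htwo i)
  obtain ⟨f, hf⟩ := hforest.exists_card_add_eq htwo hsum
  refine ⟨f, fun t => ?_⟩
  have hcard := card_eq_three_of_add_eq hn hB hbound (hf t)
  have := hf t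
  exact ⟨hcard, by omega⟩
section SolutionOfTriples

open Finset

theorem exists_slots {ι : Type*} (S : Finset ι) (n : ι → ℕ) :
    ∃ slot : ι → ℕ → ℕ, (∀ i ∈ S, ∀ j < n i, slot i j < ∑ i ∈ S, n i) ∧
      ∀ k < ∑ i ∈ S, n i, ∃ i ∈ S, ∃ j < n i, slot i j = k := by
  classical
  induction S using Finset.induction_on with
  | empty => simp
  | insert a S ha ih =>
    obtain ⟨slot, hlt, hsurj⟩ := ih
    have hne : ∀ i ∈ S, i ≠ a := fun i hi => ne_of_mem_of_not_mem hi ha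
    rw [sum_insert ha]
    refine ⟨fun i j => if i = a then ∑ i ∈ S, n i + j else slot i j, ?_, fun k hk => ?_⟩
    · intro i hi j hj
      obtain rfl | hi := mem_insert.1 hi
      · simp only [if_true]
        omega
      · simp only [if_neg (hne i hi)]
        exact (hlt i hi j hj).trans_le (Nat.le_add_left _ _)
    · by_cases hkS : k < ∑ i ∈ S, n i
      · obtain ⟨i, hi, j, hj, hk⟩ := hsurj k hkS
        exact ⟨i, mem_insert_of_mem hi, j, hj, by simpa only [if_neg (hne i hi)] using hk⟩
      · refine ⟨a, mem_insert_self a S, k - ∑ i ∈ S, n i, by omega, ?_⟩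
        simp only [if_true]
        omega

/-- A 3-partition together with the choices from which a solution graph is built: `triple i` is the
index of the triple containing `n i`, `member t` lists the triple with index `t`, and
`slot i j` is the index `k` of the vertex `r (triple i) k` that becomes a child of `w i j`. -/
structure Labelling (m B : ℕ) (n : Fin (3 * m) → ℕ) where
  triple : Fin (3 * m) → Fin m
  member : Fin m → Fin 3 → Fin (3 * m)
  slot : Fin (3 * m) → ℕ → ℕ
  exists_member : ∀ i, ∃ a, member (triple i) a = i
  slot_lt : ∀ {i j}, j < n i → slot i j < B
  exists_slot : ∀ t, ∀ k < B, ∃ i, triple i = t ∧ ∃ j < n i, slot i j = k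

variable {m B : ℕ} {n : Fin (3 * m) → ℕ}

theorem ThreePartition.nonempty_labelling (h : ThreePartition m B n) :
    Nonempty (Labelling m B n) := by
  obtain ⟨f, hf⟩ := h
  have hmember (t : Fin m) : ∃ g : Fin 3 → Fin (3 * m), ∀ i, f i = t → ∃ a, g a = i := by
    obtain ⟨x, y, z, -, -, -, hxyz⟩ := card_eq_three.1 (hf t).1
    refine ⟨![x, y, z], fun i hi => ?_⟩
    have hmem : i ∈ ({x, y, z} : Finset _) := hxyz ▸ mem_filter.2 ⟨mem_univ i, hi⟩
    simpa [Fin.exists_fin_succ, eq_comm] using hmem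
  choose member hmember using hmember
  choose slot hlt hsurj using fun t => exists_slots {i | f i = t} n
  simp only [(hf _).2, mem_filter, mem_univ, true_and] at hlt hsurj
  exact ⟨⟨f, member, fun i => slot (f i) i, fun i => hmember _ i rfl, fun hj => hlt _ _ rfl _ hj,
    fun t k hk => by
      obtain ⟨i, rfl, j, hj, hk⟩ := hsurj t k hk
      exact ⟨i, rfl, j, hj, hk⟩⟩⟩

namespace Labelling

variable (F : Labelling m B n)

/-- The out-neighbours in the solution graph built from a labelling: `s t` and `s' t` distribute to
the three paths `w i 0, …, w i (n i - 1)` of the triple `t`, and each `w i j` continues its path and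
serves one vertex `r t k`. -/
def children : Vtx m → Finset (Vtx m)
  | .s t => {.s' t, .w (F.member t 2) 0}
  | .s' t => {.w (F.member t 0) 0, .w (F.member t 1) 0}
  | .w i j => {if j + 1 < n i then .w i (j + 1) else .wt i, .r (F.triple i) (F.slot i j)}
  | .r t k => {.rt t k, .rb t k}
  | _ => ∅

/-- The solution graph built from a labelling. -/
def graph : Finset (Vtx m × Vtx m) :=
  (spine m B n).biUnion fun u => (F.children u).image (Prod.mk u)

variable {F} {u v : Vtx m}

theorem mem_graph : (u, v) ∈ F.graph ↔ u ∈ mainPath m B n ∧ v ∈ F.children u := by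
  simp [graph, spine]

theorem outDeg_graph_le (u : Vtx m) : outDeg F.graph u ≤ 2 := by
  have hsub : {e ∈ F.graph | e.1 = u} ⊆ (F.children u).image (Prod.mk u) := by
    rintro ⟨u', v⟩ he
    obtain ⟨hmem, rfl⟩ := mem_filter.1 he
    exact mem_image_of_mem _ (mem_graph.1 hmem).2
  have hchildren : #(F.children u) ≤ 2 := by
    cases u <;> simp [children, card_le_two]
  exact (card_le_card hsub).trans (card_image_le.trans hchildren)

theorem mem_graph_of_isDirect (h : IsDirect B n u v) : (u, v) ∈ F.graph := by
  rw [mem_graph]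
  cases h with
  | s_s' t => simp [children]
  | w_w hj => simp [children, hj, Nat.lt_of_succ_lt hj]
  | w_wt hj => simp [children, ← hj]
  | r_rt t hk => simp [children, hk]
  | r_rb t hk => simp [children, hk]

theorem isDirect_or_sublist_of_mem_graph (hpos : ∀ i, 0 < n i) (h : (u, v) ∈ F.graph) :
    IsDirect B n u v ∨ [u, v].Sublist (mainPath m B n) := by
  obtain ⟨hu, hv⟩ := mem_graph.1 h
  have hw (i : Fin (3 * m)) : [Vtx.w i 0].Sublist ((List.range (n i)).map (Vtx.w i)) := by
    simp [hpos i]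
  cases u with
  | s t =>
    obtain rfl | rfl : v = .s' t ∨ v = .w (F.member t 2) 0 := by simpa [children] using hv
    · exact .inl (.s_s' t)
    · exact .inr (append_sublist_mainPath (t := t) (t' := t) (a := [.s t]) (by simp) (hw _)
        (List.nil_sublist _))
  | s' t =>
    obtain ⟨i, rfl⟩ : ∃ i, v = .w i 0 := by
      have : v = .w (F.member t 0) 0 ∨ v = .w (F.member t 1) 0 := by simpa [children] using hv
      exact this.elim (⟨_, ·⟩) (⟨_, ·⟩)
    exact .inr (append_sublist_mainPath (t := t) (t' := t) (a := [.s' t]) (by simp) (hw i)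
      (List.nil_sublist _))
  | w i j =>
    have hj : j < n i := mem_mainPath_w.1 hu
    obtain rfl | rfl : v = (if j + 1 < n i then .w i (j + 1) else .wt i) ∨
        v = .r (F.triple i) (F.slot i j) := by
      simpa only [children, mem_insert, mem_singleton] using hv
    · split_ifs with hj'
      · exact .inl (.w_w hj')
      · exact .inl (.w_wt (by omega))
    · exact .inr (append_sublist_mainPath (t := F.triple i) (t' := F.triple i) (i := i)
        (b := [.w i j]) (c := [.r (F.triple i) (F.slot i j)]) (List.nil_sublist _) (by simp [hj])
        (by simp [F.slot_lt hj]))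
  | r t k =>
    have hk : k < B := mem_mainPath_r.1 hu
    obtain rfl | rfl : v = .rt t k ∨ v = .rb t k := by simpa [children] using hv
    · exact .inl (.r_rt t hk)
    · exact .inl (.r_rb t hk)
  | wt i => simp [children] at hv
  | rt t k => simp [children] at hv
  | rb t k => simp [children] at hv

theorem tcAdj_of_mem_graph (hpos : ∀ i, 0 < n i) (h : (u, v) ∈ F.graph) :
    TCAdj (hardD m B n) u v :=
  (isDirect_or_sublist_of_mem_graph hpos h).elim
    (fun h => (isSpine_hardD hpos).tcAdj_of_mem h.mem_hardD)
    (isSpine_hardD hpos).tcAdj_of_sublist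

variable (F) in
theorem exists_chain_to_w (i : Fin (3 * m)) :
    ∃ l : List (Vtx m), l.Sublist [.s (F.triple i), .s' (F.triple i)] ∧
      l.head? = some (.s (F.triple i)) ∧ l.IsChain (Adj F.graph) ∧
      ∀ u ∈ l.getLast?, (u, .w i 0) ∈ F.graph := by
  obtain ⟨a, ha⟩ := F.exists_member i
  by_cases ha2 : a = 2
  · refine ⟨[.s (F.triple i)], by simp, rfl, by simp, ?_⟩
    simp [mem_graph, children, ← ha2, ha]
  · refine ⟨[.s (F.triple i), .s' (F.triple i)], by simp, rfl,
      List.isChain_pair.2 (mem_graph_of_isDirect (.s_s' _)), ?_⟩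
    have : a = 0 ∨ a = 1 := by omega
    rcases this with rfl | rfl <;> simp [mem_graph, children, ha]

theorem isChain_map_w {i : Fin (3 * m)} {j : ℕ} (hj : j < n i) :
    ((List.range (j + 1)).map (Vtx.w i)).IsChain (Adj F.graph) := by
  rw [List.isChain_map, List.isChain_range_succ]
  exact fun j' hj' => mem_graph_of_isDirect (.w_w (by omega))

variable (F) in
theorem exists_diPath_s_r (t : Fin m) {k : ℕ} (hk : k < B) :
    ∃ l, DiPath (Adj F.graph) (.s t) (.r t k) l ∧ l.Sublist (mainPath m B n) := by
  obtain ⟨i, rfl, j, hj, rfl⟩ := F.exists_slot t k hk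
  obtain ⟨l, hl, hhead, hchain, hlast⟩ := F.exists_chain_to_w i
  have hw : ((List.range (j + 1)).map (Vtx.w i)).Sublist ((List.range (n i)).map (Vtx.w i)) :=
    (List.range_sublist.2 hj).map _
  have hsub : (l ++ (List.range (j + 1)).map (Vtx.w i) ++ [Vtx.r (F.triple i) (F.slot i j)]).Sublist
      (mainPath m B n) :=
    append_sublist_mainPath (t' := F.triple i) hl hw (by simp [F.slot_lt hj])
  refine ⟨_, ⟨?_, hsub.nodup nodup_mainPath, by simp [hhead], by simp⟩, hsub⟩
  refine List.isChain_append.2 ⟨List.isChain_append.2 ⟨hchain, isChain_map_w hj, ?_⟩, by simp, ?_⟩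
  · intro u hu v hv
    obtain rfl : Vtx.w i 0 = v := by simpa [List.range_succ_eq_map] using hv
    exact hlast u hu
  · intro u hu v hv
    obtain rfl : Vtx.w i j = u := by simpa [List.range_succ] using hu
    obtain rfl : Vtx.r (F.triple i) (F.slot i j) = v := by simpa using hv
    exact mem_graph.2 (by simp [children, hj])

variable (F) in
theorem pairSolution_graph (hpos : ∀ i, 0 < n i) :
    PairSolution (hardD m B n) (hardK m B n) 2 F.graph where
  tcAdj _ h := tcAdj_of_mem_graph hpos h
  outDeg_le := outDeg_graph_le
  route u v P huv hP := by
    obtain h | ⟨t, k, hk, rfl, rfl⟩ := (mem_hardK_iff hpos).1 huv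
    · have hne := (isSpine_hardD hpos).ne h.mem_hardD
      exact ⟨[u, v], diPath_pair hne (mem_graph_of_isDirect h),
        pair_sublist_of_head?_of_getLast? hne hP.2.2.1 hP.2.2.2⟩
    · obtain ⟨l, hl, hsub⟩ := F.exists_diPath_s_r t hk
      exact ⟨l, hl, (isSpine_hardD hpos).sublist_of_diPath hP hsub hl.2.2.1 hl.2.2.2⟩

end Labelling

end SolutionOfTriples

/-- For pairwise distinct positive integers `n_1, …, n_{3m}`
with `∑ n_i = m·B` and `B/4 < n_i < B/2`, consider the MD-SPP instance obtained
from the construction by routing each commodity pair in `hardK` along the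
unique directed path in `hardD` from its source to its destination (so `Kspp`
consists exactly of the triples `(s,t,P)` with `(s,t) ∈ hardK` and `P` a
directed `s`-`t`-path in `hardD`). Then the 3-Partition instance is solvable
iff this MD-SPP instance with target `2` is a YES-instance. -/
theorem threePartition_iff_mdspp (m B : ℕ) (n : Fin (3 * m) → ℕ)
    (hdist : Function.Injective n) (hpos : ∀ i, 0 < n i)
    (hsum : ∑ i, n i = m * B)
    (hbound : ∀ i, B < 4 * n i ∧ 2 * n i < B)
    (Kspp : Finset (Vtx m × Vtx m × List (Vtx m)))
    (hKspp : ∀ k : Vtx m × Vtx m × List (Vtx m),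
      k ∈ Kspp ↔ ((k.1, k.2.1) ∈ hardK m B n ∧
        DiPath (Adj (hardD m B n)) k.1 k.2.1 k.2.2)) :
    ThreePartition m B n ↔
      ∃ H : Finset (Vtx m × Vtx m), SPPSolution (hardD m B n) Kspp 2 H := by
  simp only [sppSolution_iff_pairSolution hKspp]
  constructor
  · intro h
    obtain ⟨F⟩ := h.nonempty_labelling
    exact ⟨F.graph, F.pairSolution_graph hpos⟩
  · rintro ⟨H, hH⟩
    exact hH.threePartition hdist hsum hbound
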